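/- Let λ > 0 and let r, ℓ : [0,T) × ℝ → ℝ be a C² solution of the diagonal system ∂ₜr + k(r−ℓ)·∂ₓr = −(λ/2)(r+ℓ), ∂ₜℓ − k(r−ℓ)·∂ₓℓ = −(λ/2)(r+ℓ), with initial data r(0,·) = r₀ = −ℓ(0,·). Assume the forward characteristic flow (t,α) ↦ x₁(t,α) and the backward characteristic flow (t,β) ↦ x₂(t,β) are of class C¹ jointly in both variables. Then the infinitesimal compression ratios c₁(t,α) := ∂_α x₁(t,α) and c₂(t,β) := ∂_β x₂(t,β) are given by c₁(t,α) = √( k(η(t, x₁(t,α))) / k(2r₀(α)) ) · exp( ∫₀ᵗ A(τ)⁻¹·f(η(τ, x₁(τ,α)))·p(τ, x₁(τ,α)) dτ ) > 0 and c₂(t,β) = √( k(η(t, x₂(t,β))) / k(2r₀(β)) ) · exp( ∫₀ᵗ A(τ)⁻¹·f(η(τ, x₂(τ,β)))·q(τ, x₂(τ,β)) dτ ) > 0; in particular both are strictly positive, so characteristics of the same family never cross. -/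

import Mathlib

open Real Set Filter MeasureTheory

noncomputable section

/-- `L(u) = (1/2)(u·√(1+u²) + arcsinh u)`, the antiderivative of `Q(ξ) = √(1+ξ²)` with `L 0 = 0`. -/
def Lfun (u : ℝ) : ℝ := (1/2) * (u * Real.sqrt (1 + u^2) + Real.arsinh u)

/-- `û₁(η) = L⁻¹(−η/2)`. -/
def u1hat (η : ℝ) : ℝ := Function.invFun Lfun (-η/2)

/-- `k(η) = √(1 + û₁(η)²)`. -/
def kfun (η : ℝ) : ℝ := Real.sqrt (1 + (u1hat η)^2)

/-- `f(η) = k'(η)/√(k(η))`. -/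
def ffun (η : ℝ) : ℝ := deriv kfun η / Real.sqrt (kfun η)

/-- `A(t) = exp(λ t / 2)`. -/
def Afun (lam t : ℝ) : ℝ := Real.exp (lam * t / 2)

/-- `η(t,x) = r(t,x) − ℓ(t,x)`. -/
def etafun (r l : ℝ → ℝ → ℝ) (t x : ℝ) : ℝ := r t x - l t x

/-- Weighted Riemann derivative `p(t,x) = A(t)·√(k(η(t,x)))·∂ₓr(t,x)`. -/
def pfun (lam : ℝ) (r l : ℝ → ℝ → ℝ) (t x : ℝ) : ℝ :=
  Afun lam t * Real.sqrt (kfun (etafun r l t x)) * deriv (fun y => r t y) x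

/-- Weighted Riemann derivative `q(t,x) = A(t)·√(k(η(t,x)))·∂ₓℓ(t,x)`. -/
def qfun (lam : ℝ) (r l : ℝ → ℝ → ℝ) (t x : ℝ) : ℝ :=
  Afun lam t * Real.sqrt (kfun (etafun r l t x)) * deriv (fun y => l t y) x

lemma Lfun_hasDerivAt (u : ℝ) : HasDerivAt Lfun (Real.sqrt (1 + u^2)) u := by
  have hpos : (0:ℝ) < 1 + u^2 := by positivity
  have h1 : HasDerivAt (fun u : ℝ => 1 + u^2) (2 * u) u := by
    simpa using (hasDerivAt_pow 2 u).const_add 1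
  have h2 := h1.sqrt hpos.ne'
  have h3 := (((hasDerivAt_id u).mul h2).add (Real.hasDerivAt_arsinh u)).const_mul (1/2 : ℝ)
  refine (h3.congr_deriv ?_ : HasDerivAt Lfun (Real.sqrt (1 + u^2)) u)
  have hs : 0 < Real.sqrt (1 + u^2) := Real.sqrt_pos.2 hpos
  have hsq : Real.sqrt (1 + u^2) ^ 2 = 1 + u^2 := Real.sq_sqrt hpos.le
  simp only [id]
  field_simp
  rw [hsq]; ring

lemma Lfun_strictMono : StrictMono Lfun := by
  apply strictMono_of_deriv_pos
  intro u
  rw [(Lfun_hasDerivAt u).deriv]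
  positivity

lemma Lfun_continuous : Continuous Lfun :=
  continuous_iff_continuousAt.2 fun u => (Lfun_hasDerivAt u).continuousAt

lemma Lfun_neg (u : ℝ) : Lfun (-u) = - Lfun u := by
  simp [Lfun]; ring

lemma Lfun_ge (u : ℝ) (hu : 0 ≤ u) : u / 2 ≤ Lfun u := by
  have h1 : 0 ≤ Real.arsinh u := Real.arsinh_nonneg_iff.2 hu
  have h2 : 1 ≤ Real.sqrt (1 + u^2) := Real.one_le_sqrt.2 (by nlinarith)
  unfold Lfun
  nlinarith

lemma Lfun_surjective : Function.Surjective Lfun := by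
  have ht : Tendsto Lfun atTop atTop := by
    apply tendsto_atTop_mono' atTop (f₁ := fun u => u / 2)
    · filter_upwards [eventually_ge_atTop 0] with u hu using Lfun_ge u hu
    · exact tendsto_id.atTop_div_const (by norm_num)
  apply Lfun_continuous.surjective ht
  have h2 : Tendsto (fun u => - Lfun (-u)) atBot atBot :=
    tendsto_neg_atTop_atBot.comp (ht.comp tendsto_neg_atBot_atTop)
  refine h2.congr fun u => ?_
  rw [Lfun_neg, neg_neg]

lemma Lfun_invFun (y : ℝ) : Lfun (Function.invFun Lfun y) = y :=
  Function.invFun_eq (Lfun_surjective y)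

lemma invFun_Lfun_continuous : Continuous (Function.invFun Lfun) := by
  let e := Lfun_strictMono.orderIsoOfSurjective Lfun Lfun_surjective
  have : Function.invFun Lfun = e.symm := by
    funext y
    apply Lfun_strictMono.injective
    rw [Lfun_invFun]
    exact (e.apply_symm_apply y).symm
  rw [this]
  exact e.symm.continuous

lemma u1hat_continuous : Continuous u1hat :=
  invFun_Lfun_continuous.comp (by fun_prop)

lemma kfun_continuous : Continuous kfun := by
  have := u1hat_continuous
  unfold kfun
  fun_prop

lemma kfun_pos (y : ℝ) : 0 < kfun y := Real.sqrt_pos.2 (by positivity)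

lemma u1hat_hasDerivAt (y : ℝ) : HasDerivAt u1hat (-(1/2) * (kfun y)⁻¹) y := by
  have h1 : HasDerivAt (Function.invFun Lfun) (kfun y)⁻¹ (-y/2) := by
    apply HasDerivAt.of_local_left_inverse invFun_Lfun_continuous.continuousAt
      (Lfun_hasDerivAt _) (kfun_pos y).ne'
    exact Eventually.of_forall Lfun_invFun
  have h2 : HasDerivAt (fun y : ℝ => -y/2) (-(1/2)) y := by
    refine ((hasDerivAt_id y).neg.div_const 2).congr_deriv ?_
    norm_num
  exact (h1.comp y h2).congr_deriv (by ring)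

lemma kfun_hasDerivAt (y : ℝ) :
    HasDerivAt kfun (2 * u1hat y * (-(1/2) * (kfun y)⁻¹) / (2 * kfun y)) y := by
  have h := ((u1hat_hasDerivAt y).pow 2).const_add 1
  have h' := h.sqrt (by show 1 + (u1hat y)^2 ≠ 0; positivity)
  refine h'.congr_deriv ?_
  simp [kfun]

lemma kfun_deriv_continuous : Continuous (deriv kfun) := by
  have : deriv kfun = fun y => 2 * u1hat y * (-(1/2) * (kfun y)⁻¹) / (2 * kfun y) :=
    funext fun y => (kfun_hasDerivAt y).deriv
  rw [this]
  have h1 := u1hat_continuous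
  have h2 := kfun_continuous
  have h3 : ∀ y, kfun y ≠ 0 := fun y => (kfun_pos y).ne'
  have h4 : ∀ y, 2 * kfun y ≠ 0 := fun y => mul_ne_zero two_ne_zero (h3 y)
  fun_prop (disch := assumption)

lemma kfun_hasDerivAt' (y : ℝ) : HasDerivAt kfun (deriv kfun y) y :=
  (kfun_hasDerivAt y).differentiableAt.hasDerivAt

/-- The closed-open strip `[0,T) × ℝ`. -/
def strip (T : ℝ) : Set (ℝ × ℝ) := Set.Ico 0 T ×ˢ (Set.univ : Set ℝ)

lemma strip_mem {T t x : ℝ} (ht : t ∈ Set.Ico 0 T) : (t, x) ∈ strip T := ⟨ht, trivial⟩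

lemma strip_uniqueDiffOn (T : ℝ) : UniqueDiffOn ℝ (strip T) :=
  (uniqueDiffOn_Ico 0 T).prod uniqueDiffOn_univ

lemma strip_hasDerivAt_x {T : ℝ} {g : ℝ → ℝ → ℝ}
    (hg : ContDiffOn ℝ 1 (Function.uncurry g) (strip T)) {t : ℝ} (ht : t ∈ Set.Ico 0 T) (x : ℝ) :
    HasDerivAt (fun y => g t y) (fderivWithin ℝ (Function.uncurry g) (strip T) (t, x) (0, 1)) x := by
  have h1 : HasFDerivWithinAt (Function.uncurry g) _ (strip T) (t, x) :=
    ((hg.differentiableOn one_ne_zero) (t, x) (strip_mem ht)).hasFDerivWithinAt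
  have h2 : HasDerivAt (fun y : ℝ => (t, y)) (0, 1) x :=
    (hasDerivAt_const x t).prodMk (hasDerivAt_id x)
  exact HasFDerivWithinAt.comp_hasDerivAt (f := fun y : ℝ => (t, y)) x h1 h2
    (Eventually.of_forall fun y => strip_mem ht)

lemma strip_hasDerivAt_path {T : ℝ} {g : ℝ → ℝ → ℝ}
    (hg : ContDiffOn ℝ 1 (Function.uncurry g) (strip T)) {t : ℝ} (ht : t ∈ Set.Ioo 0 T)
    {Y : ℝ → ℝ} {v : ℝ} (hY : HasDerivAt Y v t) :
    HasDerivAt (fun s => g s (Y s))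
      (fderivWithin ℝ (Function.uncurry g) (strip T) (t, Y t) (1, v)) t := by
  have h1 : HasFDerivWithinAt (Function.uncurry g) _ (strip T) (t, Y t) :=
    ((hg.differentiableOn one_ne_zero) (t, Y t)
      (strip_mem (Set.Ioo_subset_Ico_self ht))).hasFDerivWithinAt
  have h2 : HasDerivAt (fun s : ℝ => (s, Y s)) (1, v) t := (hasDerivAt_id t).prodMk hY
  refine HasFDerivWithinAt.comp_hasDerivAt (f := fun s : ℝ => (s, Y s)) t h1 h2 ?_
  filter_upwards [Ioo_mem_nhds ht.1 ht.2] with s hs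
  exact strip_mem (Set.Ioo_subset_Ico_self hs)

lemma strip_chain {T : ℝ} {g : ℝ → ℝ → ℝ}
    (hg : ContDiffOn ℝ 1 (Function.uncurry g) (strip T)) {t : ℝ} (ht : t ∈ Set.Ioo 0 T)
    {Y : ℝ → ℝ} {v : ℝ} (hY : HasDerivAt Y v t) :
    HasDerivAt (fun s => g s (Y s))
      (deriv (fun s => g s (Y t)) t + v * deriv (fun y => g t y) (Y t)) t := by
  refine (strip_hasDerivAt_path hg ht hY).congr_deriv ?_
  rw [(strip_hasDerivAt_x hg (Set.Ioo_subset_Ico_self ht) (Y t)).deriv,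
    (strip_hasDerivAt_path hg ht (hasDerivAt_const t (Y t))).deriv]
  have : ((1, v) : ℝ × ℝ) = (1, 0) + v • (0, 1) := by simp
  rw [this, map_add, map_smul, smul_eq_mul]

lemma strip_continuousOn_dx {T : ℝ} {g : ℝ → ℝ → ℝ}
    (hg : ContDiffOn ℝ 1 (Function.uncurry g) (strip T)) :
    ContinuousOn (fun z : ℝ × ℝ => deriv (fun y => g z.1 y) z.2) (strip T) := by
  have h := (hg.continuousOn_fderivWithin (strip_uniqueDiffOn T) le_rfl).clm_apply
    (continuousOn_const (c := ((0, 1) : ℝ × ℝ)))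
  refine h.congr fun z hz => ?_
  exact (strip_hasDerivAt_x hg hz.1 z.2).deriv

lemma ftc_Ico {T : ℝ} {n : ℝ → ℝ} (hn : ContinuousOn n (Set.Ico 0 T)) {t : ℝ}
    (ht : t ∈ Set.Ioo 0 T) : HasDerivAt (fun s => ∫ τ in (0:ℝ)..s, n τ) (n t) t := by
  have hn' : ContinuousOn n (Set.Ioo 0 T) := hn.mono Set.Ioo_subset_Ico_self
  apply intervalIntegral.integral_hasDerivAt_right
  · apply ContinuousOn.intervalIntegrable_of_Icc ht.1.le
    exact hn.mono fun s hs => ⟨hs.1, hs.2.trans_lt ht.2⟩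
  · exact hn'.stronglyMeasurableAtFilter isOpen_Ioo t ht
  · exact hn'.continuousAt (Ioo_mem_nhds ht.1 ht.2)

lemma comp_ratio_integral {T σ : ℝ} {E X : ℝ → ℝ → ℝ}
    (hE : ContDiffOn ℝ 1 (Function.uncurry E) (strip T))
    (hX : ContDiffOn ℝ 1 (Function.uncurry X) (strip T))
    (hX0 : ∀ a, X 0 a = a)
    (hXt : ∀ a, ∀ t ∈ Set.Ico (0:ℝ) T,
      HasDerivAt (fun s => X s a) (σ * kfun (E t (X t a))) t)
    {t : ℝ} (ht : t ∈ Set.Ico 0 T) (a : ℝ) :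
    deriv (fun a' => X t a') a = 1 + ∫ s in (0:ℝ)..t,
      σ * deriv kfun (E s (X s a)) * deriv (fun y => E s y) (X s a) *
        deriv (fun a' => X s a') a := by
  have hXc : ContinuousOn (fun z : ℝ × ℝ => (z.1, X z.1 z.2)) (strip T) :=
    continuousOn_fst.prodMk hX.continuousOn
  have hXm : Set.MapsTo (fun z : ℝ × ℝ => (z.1, X z.1 z.2)) (strip T) (strip T) :=
    fun z hz => strip_mem hz.1
  have hEc : ContinuousOn (fun z : ℝ × ℝ => E z.1 (X z.1 z.2)) (strip T) :=
    hE.continuousOn.comp hXc hXm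
  have hExc : ContinuousOn (fun z : ℝ × ℝ => deriv (fun y => E z.1 y) (X z.1 z.2)) (strip T) :=
    (strip_continuousOn_dx hE).comp hXc hXm
  have hF : ContinuousOn (fun z : ℝ × ℝ => σ * kfun (E z.1 (X z.1 z.2))) (strip T) :=
    continuousOn_const.mul (kfun_continuous.comp_continuousOn hEc)
  have hF' : ContinuousOn (fun z : ℝ × ℝ => σ * deriv kfun (E z.1 (X z.1 z.2)) *
      deriv (fun y => E z.1 y) (X z.1 z.2) * deriv (fun a' => X z.1 a') z.2) (strip T) :=
    ((continuousOn_const.mul (kfun_deriv_continuous.comp_continuousOn hEc)).mul hExc).mul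
      (strip_continuousOn_dx hX)
  have hsub : Set.Icc 0 t ⊆ Set.Ico 0 T := fun s hs => ⟨hs.1, hs.2.trans_lt ht.2⟩
  have hline : ∀ (G : ℝ × ℝ → ℝ), ContinuousOn G (strip T) → ∀ b : ℝ,
      ContinuousOn (fun s => G (s, b)) (Set.Icc 0 t) := fun G hG b =>
    hG.comp (by fun_prop) fun s hs => strip_mem (hsub hs)
  have hIoc : Set.uIoc (0:ℝ) t = Set.Ioc 0 t := uIoc_of_le ht.1
  have hcpt : IsCompact (Set.Icc (0:ℝ) t ×ˢ Set.Icc (a-1) (a+1)) := isCompact_Icc.prod isCompact_Icc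
  obtain ⟨C, hC⟩ := hcpt.exists_bound_of_continuousOn
    (hF'.mono fun z hz => ⟨hsub hz.1, trivial⟩)
  have key := (intervalIntegral.hasDerivAt_integral_of_dominated_loc_of_deriv_le (μ := volume)
    (a := 0) (b := t) (F := fun b s => σ * kfun (E s (X s b)))
    (F' := fun b s => σ * deriv kfun (E s (X s b)) * deriv (fun y => E s y) (X s b) *
        deriv (fun a' => X s a') b) (x₀ := a) (s := Set.Icc (a-1) (a+1)) (bound := fun _ => C)
    (Icc_mem_nhds (by linarith) (by linarith))
    (Eventually.of_forall fun b => ?_) ?_ ?_ ?_ ?_ ?_).2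
  · have hform : (fun a' => X t a') = fun b => b + ∫ s in (0:ℝ)..t, σ * kfun (E s (X s b)) := by
      funext b
      rw [intervalIntegral.integral_eq_sub_of_hasDerivAt (f := fun s => X s b)]
      · rw [hX0]; ring
      · intro s hs
        rw [uIcc_of_le ht.1] at hs
        exact hXt b s (hsub hs)
      · exact (hline _ hF b).intervalIntegrable_of_Icc ht.1
    rw [hform]
    exact ((hasDerivAt_id a).add key).deriv
  · rw [hIoc]
    exact ((hline _ hF b).mono Set.Ioc_subset_Icc_self).aestronglyMeasurable measurableSet_Ioc
  · exact (hline _ hF a).intervalIntegrable_of_Icc ht.1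
  · rw [hIoc]
    exact ((hline _ hF' a).mono Set.Ioc_subset_Icc_self).aestronglyMeasurable measurableSet_Ioc
  · refine Eventually.of_forall fun s hs b hb => ?_
    rw [hIoc] at hs
    exact hC (s, b) ⟨Set.Ioc_subset_Icc_self hs, hb⟩
  · exact intervalIntegrable_const
  · refine Eventually.of_forall fun s hs b hb => ?_
    rw [hIoc] at hs
    have hs' := hsub (Set.Ioc_subset_Icc_self hs)
    have d1 := strip_hasDerivAt_x hX hs' b
    have d2 := strip_hasDerivAt_x hE hs' (X s b)
    rw [d1.deriv, d2.deriv]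
    have d3 := ((kfun_hasDerivAt' (E s (X s b))).comp b (d2.comp b d1)).const_mul σ
    exact d3.congr_deriv (by ring)

lemma comp_ratio {T σ : ℝ} {E X w : ℝ → ℝ → ℝ}
    (hE : ContDiffOn ℝ 1 (Function.uncurry E) (strip T))
    (hX : ContDiffOn ℝ 1 (Function.uncurry X) (strip T))
    (hX0 : ∀ a, X 0 a = a)
    (hXt : ∀ a, ∀ t ∈ Set.Ico (0:ℝ) T,
      HasDerivAt (fun s => X s a) (σ * kfun (E t (X t a))) t)
    (hw : ContinuousOn (fun z : ℝ × ℝ => w z.1 z.2) (strip T))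
    (heq : ∀ t ∈ Set.Ioo (0:ℝ) T, ∀ x, deriv (fun s => E s x) t
      + σ * kfun (E t x) * deriv (fun y => E t y) x
      = 2 * kfun (E t x) * (σ * deriv (fun y => E t y) x - w t x))
    {t : ℝ} (ht : t ∈ Set.Ico 0 T) (a : ℝ) :
    deriv (fun a' => X t a') a = Real.sqrt (kfun (E t (X t a)) / kfun (E 0 a)) *
      Real.exp (∫ s in (0:ℝ)..t, deriv kfun (E s (X s a)) * w s (X s a)) := by
  have hsub : Set.Icc 0 t ⊆ Set.Ico 0 T := fun s hs => ⟨hs.1, hs.2.trans_lt ht.2⟩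
  have hl : ContinuousOn (fun s : ℝ => (s, a)) (Set.Ico 0 T) := by fun_prop
  have hlm : Set.MapsTo (fun s : ℝ => (s, a)) (Set.Ico 0 T) (strip T) := fun s hs => strip_mem hs
  have hXl : ContinuousOn (fun s : ℝ => (s, X s a)) (Set.Ico 0 T) :=
    continuousOn_id.prodMk (hX.continuousOn.comp hl hlm)
  have hXlm : Set.MapsTo (fun s : ℝ => (s, X s a)) (Set.Ico 0 T) (strip T) :=
    fun s hs => strip_mem hs
  have hEl : ContinuousOn (fun s => E s (X s a)) (Set.Ico 0 T) := hE.continuousOn.comp hXl hXlm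
  have hwl : ContinuousOn (fun s => w s (X s a)) (Set.Ico 0 T) := hw.comp hXl hXlm
  have hExl : ContinuousOn (fun s => deriv (fun y => E s y) (X s a)) (Set.Ico 0 T) :=
    (strip_continuousOn_dx hE).comp hXl hXlm
  have hcl : ContinuousOn (fun s => deriv (fun a' => X s a') a) (Set.Ico 0 T) :=
    (strip_continuousOn_dx hX).comp hl hlm
  have hk'l := kfun_deriv_continuous.comp_continuousOn hEl
  have hkl := kfun_continuous.comp_continuousOn hEl
  have hn : ContinuousOn (fun s => deriv kfun (E s (X s a)) * w s (X s a)) (Set.Ico 0 T) :=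
    hk'l.mul hwl
  have hmc : ContinuousOn (fun s => σ * deriv kfun (E s (X s a)) *
      deriv (fun y => E s y) (X s a) * deriv (fun a' => X s a') a) (Set.Ico 0 T) :=
    ((continuousOn_const.mul hk'l).mul hExl).mul hcl
  have hcd : ∀ s ∈ Set.Ioo 0 T, HasDerivAt (fun s => deriv (fun a' => X s a') a)
      (σ * deriv kfun (E s (X s a)) *
        deriv (fun y => E s y) (X s a) * deriv (fun a' => X s a') a) s := by
    intro s hs
    refine ((ftc_Ico hmc hs).const_add 1).congr_of_eventuallyEq ?_
    filter_upwards [Ioo_mem_nhds hs.1 hs.2] with s' hs'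
    exact comp_ratio_integral hE hX hX0 hXt (Set.Ioo_subset_Ico_self hs') a
  have hNc : ContinuousOn (fun s => ∫ τ in (0:ℝ)..s, deriv kfun (E τ (X τ a)) * w τ (X τ a))
      (Set.Icc 0 t) := by
    have := intervalIntegral.continuousOn_primitive_interval (μ := volume) (a := 0) (b := t)
      (f := fun s => deriv kfun (E s (X s a)) * w s (X s a)) (by
        rw [uIcc_of_le ht.1]
        exact (hn.mono hsub).integrableOn_Icc)
    rwa [uIcc_of_le ht.1] at this
  have hconst := intervalIntegral.integral_eq_sub_of_hasDerivAt_of_le ht.1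
    (f := fun s => deriv (fun a' => X s a') a *
      Real.exp (-∫ τ in (0:ℝ)..s, deriv kfun (E τ (X τ a)) * w τ (X τ a)) /
      Real.sqrt (kfun (E s (X s a)))) (f' := fun _ => 0) ?_ ?_ intervalIntegrable_const
  · simp only [intervalIntegral.integral_zero, intervalIntegral.integral_same, neg_zero,
      Real.exp_zero, hX0, mul_one] at hconst
    rw [show deriv (fun a' : ℝ => a') a = 1 from (hasDerivAt_id a).deriv] at hconst
    have p1 := Real.sqrt_pos.2 (kfun_pos (E t (X t a)))
    have p2 := Real.sqrt_pos.2 (kfun_pos (E 0 a))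
    rw [Real.sqrt_div (kfun_pos _).le]
    rw [Real.exp_neg] at hconst
    have p3 := Real.exp_pos (∫ s in (0:ℝ)..t, deriv kfun (E s (X s a)) * w s (X s a))
    have h4 := (sub_eq_zero.1 hconst.symm)
    field_simp at h4 ⊢
    linarith
  · refine ContinuousOn.div ((hcl.mono hsub).mul hNc.neg.rexp) (hkl.mono hsub).sqrt ?_
    exact fun s _ => (Real.sqrt_pos.2 (kfun_pos _)).ne'
  · intro s hs
    have hs' : s ∈ Set.Ioo 0 T := ⟨hs.1, hs.2.trans ht.2⟩
    have hs'' := Set.Ioo_subset_Ico_self hs'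
    have e1 := strip_chain hE hs' (hXt a s hs'')
    rw [heq s hs' (X s a)] at e1
    have e0 : HasDerivAt (fun s => kfun (E s (X s a))) _ s :=
      HasDerivAt.comp (h₂ := kfun) (h := fun s => E s (X s a)) s
        (kfun_hasDerivAt' (E s (X s a))) e1
    have e2 := e0.sqrt
      (kfun_pos (E s (X s a))).ne'
    have p1 := Real.sqrt_pos.2 (kfun_pos (E s (X s a)))
    have e3 := ((hcd s hs').mul (ftc_Ico hn hs').neg.exp).div e2 p1.ne'
    refine e3.congr_deriv ?_
    have hsq := Real.sq_sqrt (kfun_pos (E s (X s a))).le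
    set K := Real.sqrt (kfun (E s (X s a)))
    rw [← hsq]
    simp only [Pi.neg_apply, Pi.mul_apply]
    field_simp
    ring

/-- explicit formula and strict positivity of the infinitesimal
compression ratios `c₁ = ∂_α x₁` and `c₂ = ∂_β x₂` of the characteristic flows. -/
theorem infinitesimal_compression_ratios
    (lam T : ℝ) (hlam : 0 < lam)
    (r l : ℝ → ℝ → ℝ) (r₀ : ℝ → ℝ)
    (hreg_r : ContDiffOn ℝ 2 (Function.uncurry r) (Set.Ico 0 T ×ˢ (Set.univ : Set ℝ)))
    (hreg_l : ContDiffOn ℝ 2 (Function.uncurry l) (Set.Ico 0 T ×ˢ (Set.univ : Set ℝ)))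
    (hsys_r : ∀ t ∈ Set.Ico (0:ℝ) T, ∀ x : ℝ,
      deriv (fun s => r s x) t + kfun (etafun r l t x) * deriv (fun y => r t y) x
        = -(lam/2) * (r t x + l t x))
    (hsys_l : ∀ t ∈ Set.Ico (0:ℝ) T, ∀ x : ℝ,
      deriv (fun s => l s x) t - kfun (etafun r l t x) * deriv (fun y => l t y) x
        = -(lam/2) * (r t x + l t x))
    (hr0 : ∀ x : ℝ, r 0 x = r₀ x)
    (hl0 : ∀ x : ℝ, l 0 x = -r₀ x)
    (x₁ x₂ : ℝ → ℝ → ℝ)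
    (hflowreg₁ : ContDiffOn ℝ 1 (Function.uncurry x₁) (Set.Ico 0 T ×ˢ (Set.univ : Set ℝ)))
    (hflowreg₂ : ContDiffOn ℝ 1 (Function.uncurry x₂) (Set.Ico 0 T ×ˢ (Set.univ : Set ℝ)))
    (hx₁0 : ∀ a : ℝ, x₁ 0 a = a)
    (hx₁ : ∀ a : ℝ, ∀ t ∈ Set.Ico (0:ℝ) T,
      HasDerivAt (fun s => x₁ s a) (kfun (etafun r l t (x₁ t a))) t)
    (hx₂0 : ∀ b : ℝ, x₂ 0 b = b)
    (hx₂ : ∀ b : ℝ, ∀ t ∈ Set.Ico (0:ℝ) T,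
      HasDerivAt (fun s => x₂ s b) (-(kfun (etafun r l t (x₂ t b)))) t) :
    ∀ t ∈ Set.Ico (0:ℝ) T,
      (∀ a : ℝ,
        deriv (fun a' => x₁ t a') a
          = Real.sqrt (kfun (etafun r l t (x₁ t a)) / kfun (2 * r₀ a)) *
            Real.exp (∫ τ in (0:ℝ)..t,
              (Afun lam τ)⁻¹ * ffun (etafun r l τ (x₁ τ a)) * pfun lam r l τ (x₁ τ a)) ∧
        0 < deriv (fun a' => x₁ t a') a) ∧
      (∀ b : ℝ,
        deriv (fun b' => x₂ t b') b
          = Real.sqrt (kfun (etafun r l t (x₂ t b)) / kfun (2 * r₀ b)) *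
            Real.exp (∫ τ in (0:ℝ)..t,
              (Afun lam τ)⁻¹ * ffun (etafun r l τ (x₂ τ b)) * qfun lam r l τ (x₂ τ b)) ∧
        0 < deriv (fun b' => x₂ t b') b) := by
  intro t ht
  have hr1 : ContDiffOn ℝ 1 (Function.uncurry r) (strip T) := hreg_r.of_le (by norm_num)
  have hl1 : ContDiffOn ℝ 1 (Function.uncurry l) (strip T) := hreg_l.of_le (by norm_num)
  have hE : ContDiffOn ℝ 1 (Function.uncurry (etafun r l)) (strip T) := hr1.sub hl1
  have hEx : ∀ s ∈ Set.Ico (0:ℝ) T, ∀ x, deriv (fun y => etafun r l s y) x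
      = deriv (fun y => r s y) x - deriv (fun y => l s y) x := fun s hs x =>
    deriv_fun_sub (strip_hasDerivAt_x hr1 hs x).differentiableAt
      (strip_hasDerivAt_x hl1 hs x).differentiableAt
  have hEt : ∀ s ∈ Set.Ioo (0:ℝ) T, ∀ x, deriv (fun y => etafun r l y x) s
      = deriv (fun y => r y x) s - deriv (fun y => l y x) s := fun s hs x =>
    deriv_fun_sub (strip_hasDerivAt_path hr1 hs (hasDerivAt_const s x)).differentiableAt
      (strip_hasDerivAt_path hl1 hs (hasDerivAt_const s x)).differentiableAt
  have hE0 : ∀ a, etafun r l 0 a = 2 * r₀ a := fun a => by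
    simp only [etafun, hr0, hl0]; ring
  have hA : ∀ s y d : ℝ, (Afun lam s)⁻¹ * ffun y * (Afun lam s * Real.sqrt (kfun y) * d)
      = deriv kfun y * d := fun s y d => by
    have h1 : 0 < Afun lam s := Real.exp_pos _
    have h2 := Real.sqrt_pos.2 (kfun_pos y)
    unfold ffun
    field_simp
  have hpos : ∀ y z u : ℝ, 0 < Real.sqrt (kfun y / kfun z) * Real.exp u := fun y z u =>
    mul_pos (Real.sqrt_pos.2 (div_pos (kfun_pos y) (kfun_pos z))) (Real.exp_pos u)
  refine ⟨fun a => ?_, fun b => ?_⟩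
  · have h := comp_ratio (σ := 1) (w := fun s x => deriv (fun y => r s y) x) hE hflowreg₁ hx₁0
      (fun a t ht => (hx₁ a t ht).congr_deriv (by ring)) (strip_continuousOn_dx hr1)
      (fun s hs x => by
        have hs' := Set.Ioo_subset_Ico_self hs
        rw [hEt s hs x, hEx s hs' x]
        linear_combination hsys_r s hs' x - hsys_l s hs' x) ht a
    rw [hE0] at h
    simp only [pfun, hA]
    exact ⟨h, h ▸ hpos _ _ _⟩
  · have h := comp_ratio (σ := -1) (w := fun s x => deriv (fun y => l s y) x) hE hflowreg₂ hx₂0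
      (fun a t ht => (hx₂ a t ht).congr_deriv (by ring)) (strip_continuousOn_dx hl1)
      (fun s hs x => by
        have hs' := Set.Ioo_subset_Ico_self hs
        rw [hEt s hs x, hEx s hs' x]
        linear_combination hsys_r s hs' x - hsys_l s hs' x) ht b
    rw [hE0] at h
    simp only [qfun, hA]
    exact ⟨h, h ▸ hpos _ _ _⟩
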